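/- arXiv:1108.5983 — 2 statements merged into one kernel-verified Lean document; each statement's English description precedes it below -/
import Mathlib

section
/- Let Σ₊, Σ₋, Σ×, N₋, N×, A, Π₊, Π₋, Π×, Ξ, q : I → ℝ be functions on an interval I with Σ₊ and A differentiable, satisfying at every point: Σ₊' = (q−2)Σ₊ − 2(N₋² + N×²) − Π₊, A' = (q+2Σ₊)A, the electro-vacuum (Ω = 0) deceleration parameter q = 2(Σ₊² + Σ₋² + Σ×²) + Π₊, the electro-vacuum Hamiltonian constraint 1 = Σ₊² + Σ₋² + Σ×² + A² + N₋² + N×² + Π₊, the momentum constraint Ξ + 2(Σ₊A + Σ₋N× − Σ×N₋) = 0, the electromagnetic constraint Π₊² = Ξ² + (1/3)(Π₋² + Π×²), and Π₊ ≥ 0. Then the function Z := (1 + Σ₊)² − A² is nonnegative and monotone nonincreasing on I. -/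
/-!
Adding the momentum constraint to, or subtracting it from, the Hamiltonian constraint completes
squares:
`1 = (Σ₊ ± A)² + (Σ₋ ± N×)² + (Σ× ∓ N₋)² + (Π₊ ± Ξ)`.
The electromagnetic constraint gives `|Ξ| ≤ Π₊`, so `|Σ₊ ± A| ≤ 1`, and both factors of
`Z = (1 + Σ₊ + A)(1 + Σ₊ - A)` are nonnegative. The Hamiltonian constraint also turns the evolution
equations into `Z' = -2(2 - q)Z` with `2 - q = 2A² + 2(N₋² + N×²) + Π₊ ≥ 0`, so `Z` decreases.
-/

theorem antitoneOn_of_hasDerivWithinAt_mul_self {I : Set ℝ} (hI : Convex ℝ I) {c z : ℝ → ℝ}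
    (hz : ∀ t ∈ I, HasDerivWithinAt z (c t * z t) I t) (hc : ∀ t ∈ I, c t ≤ 0)
    (hz_nonneg : ∀ t ∈ I, 0 ≤ z t) : AntitoneOn z I :=
  antitoneOn_of_hasDerivWithinAt_nonpos hI (fun t ht => (hz t ht).continuousWithinAt)
    (fun t ht => (hz t (interior_subset ht)).mono interior_subset)
    (fun t ht => mul_nonpos_of_nonpos_of_nonneg (hc t (interior_subset ht))
      (hz_nonneg t (interior_subset ht)))

theorem one_add_sq_sub_sq_nonneg {s a : ℝ} (hadd : |s + a| ≤ 1) (hsub : |s - a| ≤ 1) :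
    0 ≤ (1 + s) ^ 2 - a ^ 2 := by
  have hadd' : 0 ≤ 1 + s + a := by linarith [neg_le_of_abs_le hadd]
  have hsub' : 0 ≤ 1 + s - a := by linarith [neg_le_of_abs_le hsub]
  rw [sq_sub_sq]
  exact mul_nonneg hadd' hsub'

namespace ElectroVacuum

section Constraints

variable {Sp Sm Sx Nm Nx A Pp Pm Px Xi q : ℝ}

theorem abs_Xi_le_Pp (hEM : Pp ^ 2 = Xi ^ 2 + (1 / 3) * (Pm ^ 2 + Px ^ 2)) (hPp : 0 ≤ Pp) :
    |Xi| ≤ Pp := by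
  refine abs_le_of_sq_le_sq ?_ hPp
  rw [hEM]
  exact le_add_of_nonneg_right (by positivity)

theorem abs_Sp_add_A_le_one
    (hHam : 1 = Sp ^ 2 + Sm ^ 2 + Sx ^ 2 + A ^ 2 + Nm ^ 2 + Nx ^ 2 + Pp)
    (hMom : Xi + 2 * (Sp * A + Sm * Nx - Sx * Nm) = 0) (hXi : |Xi| ≤ Pp) :
    |Sp + A| ≤ 1 := by
  have hsquares : (Sp + A) ^ 2 + (Sm + Nx) ^ 2 + (Sx - Nm) ^ 2 + (Pp + Xi) = 1 := by
    linear_combination hMom - hHam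
  have hPpXi : 0 ≤ Pp + Xi := by linarith [neg_le_of_abs_le hXi]
  rw [← sq_le_one_iff_abs_le_one]
  linarith [hsquares, hPpXi, sq_nonneg (Sm + Nx), sq_nonneg (Sx - Nm)]

theorem abs_Sp_sub_A_le_one
    (hHam : 1 = Sp ^ 2 + Sm ^ 2 + Sx ^ 2 + A ^ 2 + Nm ^ 2 + Nx ^ 2 + Pp)
    (hMom : Xi + 2 * (Sp * A + Sm * Nx - Sx * Nm) = 0) (hXi : |Xi| ≤ Pp) :
    |Sp - A| ≤ 1 := by
  -- The constraints are invariant under `(A, N₋, N×, Ξ) ↦ -(A, N₋, N×, Ξ)`.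
  rw [sub_eq_add_neg]
  exact abs_Sp_add_A_le_one (Sm := Sm) (Sx := Sx) (Nm := -Nm) (Nx := -Nx) (Xi := -Xi)
    (by simpa only [neg_sq] using hHam) (by linear_combination -hMom) (by rwa [abs_neg])

theorem two_sub_q_eq (hq : q = 2 * (Sp ^ 2 + Sm ^ 2 + Sx ^ 2) + Pp)
    (hHam : 1 = Sp ^ 2 + Sm ^ 2 + Sx ^ 2 + A ^ 2 + Nm ^ 2 + Nx ^ 2 + Pp) :
    2 - q = 2 * A ^ 2 + 2 * (Nm ^ 2 + Nx ^ 2) + Pp := by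
  linear_combination 2 * hHam - hq

theorem q_le_two (hq : q = 2 * (Sp ^ 2 + Sm ^ 2 + Sx ^ 2) + Pp)
    (hHam : 1 = Sp ^ 2 + Sm ^ 2 + Sx ^ 2 + A ^ 2 + Nm ^ 2 + Nx ^ 2 + Pp) (hPp : 0 ≤ Pp) :
    q ≤ 2 := by
  rw [← sub_nonneg, two_sub_q_eq hq hHam]
  positivity

end Constraints

theorem hasDerivWithinAt_one_add_sq_sub_sq {Sp A : ℝ → ℝ} {s : Set ℝ} {τ q Nsq Pp : ℝ}
    (hSp : HasDerivWithinAt Sp ((q - 2) * Sp τ - 2 * Nsq - Pp) s τ)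
    (hA : HasDerivWithinAt A ((q + 2 * Sp τ) * A τ) s τ)
    (hq : 2 - q = 2 * A τ ^ 2 + 2 * Nsq + Pp) :
    HasDerivWithinAt (fun t => (1 + Sp t) ^ 2 - A t ^ 2)
      (-2 * (2 - q) * ((1 + Sp τ) ^ 2 - A τ ^ 2)) s τ := by
  refine (((hSp.const_add 1).fun_pow 2).fun_sub (hA.fun_pow 2)).congr_deriv ?_
  push_cast
  linear_combination 2 * (1 + Sp τ) * hq

end ElectroVacuum

open ElectroVacuum

/-- In the electro-vacuum (Ω = 0) class B Einstein–Maxwell system,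
`Z = (1+Σ₊)² − A²` is nonnegative and monotone nonincreasing. -/
theorem stmt_4 (I : Set ℝ) (hI : I.OrdConnected)
    (Sp Sm Sx Nm Nx A Pp Pm Px Xi q : ℝ → ℝ)
    (hSp : ∀ τ ∈ I, HasDerivAt Sp
      ((q τ - 2) * Sp τ - 2 * ((Nm τ) ^ 2 + (Nx τ) ^ 2) - Pp τ) τ)
    (hA : ∀ τ ∈ I, HasDerivAt A ((q τ + 2 * Sp τ) * A τ) τ)
    (hq : ∀ τ ∈ I, q τ = 2 * ((Sp τ) ^ 2 + (Sm τ) ^ 2 + (Sx τ) ^ 2) + Pp τ)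
    (hHam : ∀ τ ∈ I, 1 = (Sp τ) ^ 2 + (Sm τ) ^ 2 + (Sx τ) ^ 2
      + (A τ) ^ 2 + (Nm τ) ^ 2 + (Nx τ) ^ 2 + Pp τ)
    (hMom : ∀ τ ∈ I, Xi τ + 2 * (Sp τ * A τ + Sm τ * Nx τ - Sx τ * Nm τ) = 0)
    (hEM : ∀ τ ∈ I, (Pp τ) ^ 2 = (Xi τ) ^ 2 + (1 / 3) * ((Pm τ) ^ 2 + (Px τ) ^ 2))
    (hPp : ∀ τ ∈ I, 0 ≤ Pp τ) :
    (∀ τ ∈ I, 0 ≤ (1 + Sp τ) ^ 2 - (A τ) ^ 2) ∧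
    AntitoneOn (fun t => (1 + Sp t) ^ 2 - (A t) ^ 2) I := by
  have hZ : ∀ τ ∈ I, 0 ≤ (1 + Sp τ) ^ 2 - (A τ) ^ 2 := fun τ hτ =>
    have hXi := abs_Xi_le_Pp (hEM τ hτ) (hPp τ hτ)
    one_add_sq_sub_sq_nonneg (abs_Sp_add_A_le_one (hHam τ hτ) (hMom τ hτ) hXi)
      (abs_Sp_sub_A_le_one (hHam τ hτ) (hMom τ hτ) hXi)
  have hZ_deriv : ∀ τ ∈ I, HasDerivWithinAt (fun t => (1 + Sp t) ^ 2 - (A t) ^ 2)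
      (-2 * (2 - q τ) * ((1 + Sp τ) ^ 2 - (A τ) ^ 2)) I τ := fun τ hτ =>
    hasDerivWithinAt_one_add_sq_sub_sq (hSp τ hτ).hasDerivWithinAt (hA τ hτ).hasDerivWithinAt
      (two_sub_q_eq (hq τ hτ) (hHam τ hτ))
  have hrate : ∀ τ ∈ I, -2 * (2 - q τ) ≤ 0 := fun τ hτ => by
    linarith [q_le_two (hq τ hτ) (hHam τ hτ) (hPp τ hτ)]
  exact ⟨hZ, antitoneOn_of_hasDerivWithinAt_mul_self hI.convex hZ_deriv hrate hZ⟩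
end

section
/- Fix r > 0 and γ = 2 (stiff fluid), and define on the interval τ > 0: a(τ)⁻² = e^{4rτ}(sinh 2τ)^{1+2r}, α(τ) = −2r − (1+2r)(cosh 2τ/sinh 2τ), β(τ) = cosh 2τ/sinh 2τ, ρ(τ) = (3+4r)(sinh 2τ)⁻²·a(τ)², π₊(τ) = (4r/3)(1 + cosh 2τ/sinh 2τ)·a(τ)², q₁(τ) = −3π₊(τ). Then for every τ > 0 the equations (E1) α' − 2β' − 2αβ − 2β² = 2a⁻²ρ + 3a⁻²π₊, (E2) 2(α+β) = a⁻²q₁, (E3) −α' − 2αβ − 2 = 3a⁻²π₊, (E4) β' + 2β² − 2 = 0 hold, with ρ > 0 and π₊ > 0. This is the left-handed stiff-fluid LRS Einstein–Maxwell solution. -/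
/-!
Up to the conformal factor `a⁻²`, every quantity in the solution is a polynomial in `β = coth 2τ`:
`α` is affine in `β`, `a⁻²π₊ = (4r/3)(1 + β)`, and `a⁻²ρ = (3 + 4r)(β² - 1)` because
`sinh⁻² = coth² - 1`. The field equation (E4) is the Riccati equation `β' = 2 - 2β²`. Eliminating
derivatives with it turns (E1)–(E3) into polynomial identities in `β` and `r`, so they hold for
every solution of the Riccati equation.
-/

theorem sinh_zpow_neg_two {x : ℝ} (hx : x ≠ 0) :
    Real.sinh x ^ (-2 : ℤ) = (Real.cosh x / Real.sinh x) ^ 2 - 1 := by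
  have hsinh : Real.sinh x ≠ 0 := Real.sinh_ne_zero.mpr hx
  rw [div_pow, Real.cosh_sq, add_div, div_self (pow_ne_zero 2 hsinh), add_sub_cancel_left, one_div,
    zpow_neg, zpow_ofNat]

theorem hasDerivAt_cosh_div_sinh {x : ℝ} (hx : x ≠ 0) :
    HasDerivAt (fun t => Real.cosh t / Real.sinh t) (1 - (Real.cosh x / Real.sinh x) ^ 2) x := by
  have hsinh : Real.sinh x ≠ 0 := Real.sinh_ne_zero.mpr hx
  refine ((Real.hasDerivAt_cosh x).div (Real.hasDerivAt_sinh x) hsinh).congr_deriv ?_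
  field_simp

theorem hasDerivAt_cosh_div_sinh_const_mul {k x : ℝ} (hk : k ≠ 0) (hx : x ≠ 0) :
    HasDerivAt (fun t => Real.cosh (k * t) / Real.sinh (k * t))
      (k - k * (Real.cosh (k * x) / Real.sinh (k * x)) ^ 2) x :=
  ((hasDerivAt_cosh_div_sinh (mul_ne_zero hk hx)).comp x (hasDerivAt_const_mul k)).congr_deriv
    (by ring)

theorem stiff_field_equations_of_riccati {r τ A ρ πp : ℝ} {α β : ℝ → ℝ}
    (hα : α = fun t => -2 * r - (1 + 2 * r) * β t)
    (hβ : HasDerivAt β (2 - 2 * β τ ^ 2) τ)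
    (hρ : A * ρ = (3 + 4 * r) * (β τ ^ 2 - 1))
    (hπ : A * πp = 4 * r / 3 * (1 + β τ)) :
    (deriv α τ - 2 * deriv β τ - 2 * α τ * β τ - 2 * β τ ^ 2 = 2 * A * ρ + 3 * A * πp) ∧
      (2 * (α τ + β τ) = A * (-3 * πp)) ∧
      (-deriv α τ - 2 * α τ * β τ - 2 = 3 * A * πp) ∧
      (deriv β τ + 2 * β τ ^ 2 - 2 = 0) := by
  have hα' : deriv α τ = -((1 + 2 * r) * (2 - 2 * β τ ^ 2)) := by
    rw [hα]
    exact ((hβ.const_mul (1 + 2 * r)).const_sub (-2 * r)).deriv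
  have hατ : α τ = -2 * r - (1 + 2 * r) * β τ := congrFun hα τ
  rw [hα', hβ.deriv, hατ]
  refine ⟨?_, ?_, ?_, ?_⟩
  · linear_combination -2 * hρ - 3 * hπ
  · linear_combination 3 * hπ
  · linear_combination -3 * hπ
  · ring

/-- The left-handed stiff-fluid (γ = 2) LRS Einstein–Maxwell
solution: with `a⁻² = e^{4rτ}(sinh 2τ)^{1+2r}`,
`α = −2r − (1+2r)coth 2τ`, `β = coth 2τ`, `ρ = (3+4r)(sinh 2τ)⁻²·a²`,
`π₊ = (4r/3)(1 + coth 2τ)·a²`, `q₁ = −3π₊` (r > 0), the equations (E1)–(E4)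
with γ = 2 hold for every `τ > 0`, with `ρ > 0` and `π₊ > 0`. -/
theorem stmt_16 (r : ℝ) (hr : 0 < r)
    (a2inv α β ρ πp q1 : ℝ → ℝ)
    (ha : a2inv = fun τ => Real.exp (4 * r * τ) * Real.sinh (2 * τ) ^ ((1 + 2 * r) : ℝ))
    (hα : α = fun τ => -2 * r - (1 + 2 * r) * (Real.cosh (2 * τ) / Real.sinh (2 * τ)))
    (hβ : β = fun τ => Real.cosh (2 * τ) / Real.sinh (2 * τ))
    (hρ : ρ = fun τ => (3 + 4 * r) * (Real.sinh (2 * τ)) ^ (-2 : ℤ) * (a2inv τ)⁻¹)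
    (hπ : πp = fun τ => (4 * r / 3) * (1 + Real.cosh (2 * τ) / Real.sinh (2 * τ))
      * (a2inv τ)⁻¹)
    (hq1 : q1 = fun τ => -3 * πp τ) :
    ∀ τ : ℝ, 0 < τ →
      (deriv α τ - 2 * deriv β τ - 2 * α τ * β τ - 2 * (β τ) ^ 2
        = 2 * a2inv τ * ρ τ + 3 * a2inv τ * πp τ) ∧
      (2 * (α τ + β τ) = a2inv τ * q1 τ) ∧
      (-deriv α τ - 2 * α τ * β τ - 2 = 3 * a2inv τ * πp τ) ∧
      (deriv β τ + 2 * (β τ) ^ 2 - 2 = 0) ∧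
      0 < ρ τ ∧ 0 < πp τ := by
  intro τ hτ
  have hA : 0 < a2inv τ := by
    rw [ha]
    positivity
  have riccati : HasDerivAt β (2 - 2 * β τ ^ 2) τ := by
    rw [hβ]
    exact hasDerivAt_cosh_div_sinh_const_mul two_ne_zero hτ.ne'
  have hAρ : a2inv τ * ρ τ = (3 + 4 * r) * (β τ ^ 2 - 1) := by
    simp only [hρ, hβ, ← sinh_zpow_neg_two (mul_pos two_pos hτ).ne']
    exact mul_div_cancel₀ _ hA.ne'
  have hAπ : a2inv τ * πp τ = 4 * r / 3 * (1 + β τ) := by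
    simp only [hπ, hβ]
    exact mul_div_cancel₀ _ hA.ne'
  have ρ_pos : 0 < ρ τ := by
    simp only [hρ]
    positivity
  have πp_pos : 0 < πp τ := by
    simp only [hπ]
    positivity
  have α_affine : α = fun t => -2 * r - (1 + 2 * r) * β t := by rw [hα, hβ]
  obtain ⟨e1, e2, e3, e4⟩ := stiff_field_equations_of_riccati α_affine riccati hAρ hAπ
  exact ⟨e1, by rw [e2, hq1], e3, e4, ρ_pos, πp_pos⟩
end
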